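/- arXiv:1908.01223 — 2 statements merged into one kernel-verified Lean document; each statement's English description precedes it below -/
import Mathlib

section
/- Let G be a spider with vertex partition S, K, R as in the definition of a spider. Then alpha(G[S ∪ K]) equals either |K| - 1 or |K|(|K|-1)/2. -/
open SimpleGraph

variable {V : Type*}

/-- `a, b, c, d` form an induced path on four vertices (a `P4`) in `G`. -/
def IsP4 (G : SimpleGraph V) (a b c d : V) : Prop :=
  a ≠ b ∧ a ≠ c ∧ a ≠ d ∧ b ≠ c ∧ b ≠ d ∧ c ≠ d ∧
    G.Adj a b ∧ G.Adj b c ∧ G.Adj c d ∧ ¬G.Adj a c ∧ ¬G.Adj a d ∧ ¬G.Adj b d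

/-- A graph is a cograph if it contains no induced `P4`. -/
def IsCograph (G : SimpleGraph V) : Prop :=
  ∀ a b c d : V, ¬IsP4 G a b c d

/-- The vertex set `A` induces a `P4` in `G`. -/
def InducesP4 (G : SimpleGraph V) (A : Set V) : Prop :=
  ∃ a b c d : V, IsP4 G a b c d ∧ A = {a, b, c, d}

/-- `G` is `P4`-sparse: every set of five vertices induces at most one `P4`. -/
def P4Sparse (G : SimpleGraph V) : Prop :=
  ∀ s : Set V, s.ncard = 5 →
    ∀ A B : Set V, A ⊆ s → B ⊆ s → InducesP4 G A → InducesP4 G B → A = B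

/-- `F` is a deletion set of `G`: a set of edges of `G` whose removal yields a cograph. -/
def IsDeletionSet (G : SimpleGraph V) (F : Set (Sym2 V)) : Prop :=
  F ⊆ G.edgeSet ∧ IsCograph (G.deleteEdges F)

/-- The minimum size of a deletion set of `G`. -/
noncomputable def cographAlpha (G : SimpleGraph V) : ℕ :=
  sInf {n | ∃ F : Set (Sym2 V), IsDeletionSet G F ∧ F.ncard = n}


/-- `S, K, R` is a spider partition of the vertices of `G`. -/
def IsSpiderPartition (G : SimpleGraph V) (S K R : Set V) : Prop :=
  S ∪ K ∪ R = Set.univ ∧ Disjoint S K ∧ Disjoint S R ∧ Disjoint K R ∧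
  S.ncard = K.ncard ∧ 2 ≤ K.ncard ∧
  (∀ u ∈ S, ∀ v ∈ S, u ≠ v → ¬G.Adj u v) ∧
  (∀ u ∈ K, ∀ v ∈ K, u ≠ v → G.Adj u v) ∧
  (∀ r ∈ R, ∀ k ∈ K, G.Adj r k) ∧
  (∀ r ∈ R, ∀ s ∈ S, ¬G.Adj r s) ∧
  ∃ φ : S ≃ K,
    (∀ s : S, G.neighborSet s ∩ K = {(φ s : V)}) ∨
    (∀ s : S, G.neighborSet s ∩ K = K \ {(φ s : V)})

/-- `G` is a spider. -/
def IsSpider (G : SimpleGraph V) : Prop :=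
  ∃ S K R : Set V, IsSpiderPartition G S K R

/-!
Numbering the legs of the spider by `K` turns `G[S ∪ K]` into a split graph on `K ⊕ K` whose cross
edges are given by equality (thin spider) or by inequality (thick spider).

*Upper bounds.* A split graph is a cograph as soon as the neighbourhoods of its independent side
form a chain. It is enough to keep a single leg of a thin spider, and of a thick one the cross edges
`i — j` with `i < j`.

*Lower bounds.* Each pair of legs `i ≠ j` carries an induced `P4`, which a deletion set must meet.
Fold the two copies of `K` together, so that a deletion set becomes a set of unordered pairs. In the
thick case the `P4` folds onto the single pair `{i, j}`, so all pairs of distinct legs occur. In the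
thin case it folds onto `{i, i}`, `{i, j}`, `{j, j}`; if some loop `{i, i}` is missing, then every
other `j` contributes `{j, j}` or `{i, j}`.
-/

section Deletion

variable {W : Type*} {G : SimpleGraph V} {H : SimpleGraph W}

theorem IsP4.map {a b c d : V} (h : IsP4 G a b c d) (f : G ↪g H) :
    IsP4 H (f a) (f b) (f c) (f d) := by
  simpa only [IsP4, ne_eq, f.injective.eq_iff, f.map_adj_iff] using h

theorem IsCograph.of_embedding (hH : IsCograph H) (f : G ↪g H) : IsCograph G :=
  fun _ _ _ _ h => hH _ _ _ _ (h.map f)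

theorem isCograph_bot : IsCograph (⊥ : SimpleGraph V) :=
  fun _ _ _ _ ⟨_, _, _, _, _, _, hab, _⟩ => hab

theorem isDeletionSet_edgeSet (G : SimpleGraph V) : IsDeletionSet G G.edgeSet :=
  ⟨subset_rfl, by simpa only [deleteEdges_edgeSet, sdiff_self] using isCograph_bot⟩

theorem IsDeletionSet.preimage {F : Set (Sym2 W)} (hF : IsDeletionSet H F) (f : G ↪g H) :
    IsDeletionSet G (Sym2.map f ⁻¹' F) := by
  refine ⟨?_, hF.2.of_embedding ⟨f.toEmbedding, by simp⟩⟩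
  rintro ⟨a, b⟩ hab
  exact f.map_adj_iff.1 (hF.1 hab)

theorem IsDeletionSet.mem_of_isP4 {F : Set (Sym2 V)} (hF : IsDeletionSet G F) {a b c d : V}
    (hP : IsP4 G a b c d) : s(a, b) ∈ F ∨ s(b, c) ∈ F ∨ s(c, d) ∈ F := by
  by_contra! hunmet
  refine hF.2 a b c d ?_
  simp_all [IsP4]

theorem cographAlpha_le {F : Set (Sym2 V)} (hF : IsDeletionSet G F) : cographAlpha G ≤ F.ncard :=
  Nat.sInf_le ⟨F, hF, rfl⟩

theorem le_cographAlpha {n : ℕ} (h : ∀ F, IsDeletionSet G F → n ≤ F.ncard) :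
    n ≤ cographAlpha G :=
  le_csInf ⟨_, G.edgeSet, isDeletionSet_edgeSet G, rfl⟩ fun _ ⟨F, hF, hn⟩ => hn ▸ h F hF

theorem cographAlpha_le_of_iso (e : G ≃g H) : cographAlpha G ≤ cographAlpha H :=
  le_cographAlpha fun F hF => (cographAlpha_le (hF.preimage e.toEmbedding)).trans_eq <|
    Set.ncard_preimage_of_injective_subset_range (Sym2.map.injective e.injective)
      fun z _ => ⟨z.map e.symm, by simp [Sym2.map_map]⟩

theorem cographAlpha_congr (e : G ≃g H) : cographAlpha G = cographAlpha H :=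
  (cographAlpha_le_of_iso e).antisymm (cographAlpha_le_of_iso e.symm)

end Deletion

section SplitGraph

variable {α β : Type*} {r : α → β → Prop}

/-- The split graph on `α ⊕ β` with independent side `α`, clique side `β`, and cross edges given by
the relation `r`. -/
def splitGraph (r : α → β → Prop) : SimpleGraph (α ⊕ β) where
  Adj
    | .inl _, .inl _ => False
    | .inl a, .inr b => r a b
    | .inr b, .inl a => r a b
    | .inr b, .inr b' => b ≠ b'
  symm := ⟨by rintro (a | b) (a' | b') h <;> first | exact h | exact h.symm⟩
  loopless := ⟨by rintro (a | b) h <;> simp at h⟩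

@[simp] theorem splitGraph_adj_inl_inl {a a' : α} : ¬(splitGraph r).Adj (.inl a) (.inl a') := id

@[simp] theorem splitGraph_adj_inl_inr {a : α} {b : β} :
    (splitGraph r).Adj (.inl a) (.inr b) ↔ r a b := Iff.rfl

@[simp] theorem splitGraph_adj_inr_inl {a : α} {b : β} :
    (splitGraph r).Adj (.inr b) (.inl a) ↔ r a b := Iff.rfl

@[simp] theorem splitGraph_adj_inr_inr {b b' : β} :
    (splitGraph r).Adj (.inr b) (.inr b') ↔ b ≠ b' := Iff.rfl

theorem isP4_splitGraph_iff {x y z w : α ⊕ β} : IsP4 (splitGraph r) x y z w ↔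
    ∃ a b b' a', x = .inl a ∧ y = .inr b ∧ z = .inr b' ∧ w = .inl a' ∧
      r a b ∧ ¬r a b' ∧ r a' b' ∧ ¬r a' b := by
  constructor
  · rcases x with a | _ <;> rcases y with _ | b <;> rcases z with _ | b' <;>
      rcases w with a' | _ <;>
      grind [IsP4, splitGraph_adj_inl_inl, splitGraph_adj_inl_inr, splitGraph_adj_inr_inl,
        splitGraph_adj_inr_inr]
  · rintro ⟨a, b, b', a', rfl, rfl, rfl, rfl, hab, hab', ha'b', ha'b⟩
    grind [IsP4, splitGraph_adj_inl_inl, splitGraph_adj_inl_inr, splitGraph_adj_inr_inl,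
      splitGraph_adj_inr_inr]

theorem isCograph_splitGraph_iff :
    IsCograph (splitGraph r) ↔ ∀ a a', r a ≤ r a' ∨ r a' ≤ r a := by
  simp only [IsCograph, isP4_splitGraph_iff, Pi.le_def, le_Prop_eq]
  grind

/-- The possible cross edge of a split graph on `α ⊕ β` between `p.1 : α` and `p.2 : β`. -/
def crossEdge (p : α × β) : Sym2 (α ⊕ β) := s(.inl p.1, .inr p.2)

theorem crossEdge_injective : Function.Injective (crossEdge : α × β → Sym2 (α ⊕ β)) := by
  rintro ⟨a, b⟩ ⟨a', b'⟩ h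
  simpa [crossEdge] using h

theorem splitGraph_deleteEdges_image_crossEdge (D : Set (α × β)) :
    (splitGraph r).deleteEdges (crossEdge '' D) = splitGraph fun a b => r a b ∧ (a, b) ∉ D := by
  ext (a | b) (a' | b') <;> simp [crossEdge]

theorem cographAlpha_splitGraph_le {r' : α → β → Prop} (hle : r' ≤ r)
    (hr' : ∀ a a', r' a ≤ r' a' ∨ r' a' ≤ r' a) :
    cographAlpha (splitGraph r) ≤ {p : α × β | r p.1 p.2 ∧ ¬r' p.1 p.2}.ncard := by
  have hdelete : (fun a b => r a b ∧ (a, b) ∉ {p : α × β | r p.1 p.2 ∧ ¬r' p.1 p.2}) = r' := by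
    ext a b
    have himp : r' a b → r a b := hle a b
    grind
  rw [← Set.ncard_image_of_injective _ crossEdge_injective]
  refine cographAlpha_le ⟨?_, ?_⟩
  · rintro _ ⟨p, hp, rfl⟩
    exact hp.1
  · rw [splitGraph_deleteEdges_image_crossEdge, hdelete]
    exact isCograph_splitGraph_iff.2 hr'

/-- The induced subgraph on an independent set and a clique, with both sides relabelled, as a
split graph. -/
noncomputable def splitGraphIsoInduce {G : SimpleGraph V} {S K : Set V} (hdisj : Disjoint S K)
    (hS : G.IsIndepSet S) (hK : G.IsClique K) (f : α ≃ S) (g : β ≃ K) :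
    splitGraph (fun a b => G.Adj (f a) (g b)) ≃g G.induce (S ∪ K) := by
  classical
  refine ⟨(f.sumCongr g).trans (Equiv.Set.union hdisj).symm, ?_⟩
  rintro (a | b) (a' | b')
  · simpa using fun h => hS (f a).2 (f a').2 h.ne h
  · simp
  · simp [G.adj_comm]
  · simpa using ⟨fun h => by rintro rfl; simp at h,
      fun h => hK (g b).2 (g b').2 <| Subtype.coe_injective.ne (g.injective.ne h)⟩

end SplitGraph

section Legs

variable {ι : Type*} [Finite ι]

theorem card_sub_one_le_ncard_of_loop_or_edge_mem {F : Set (Sym2 ι)}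
    (hF : ∀ i j, i ≠ j → s(i, i) ∈ F ∨ s(i, j) ∈ F ∨ s(j, j) ∈ F) :
    Nat.card ι - 1 ≤ F.ncard := by
  by_cases hloops : ∀ i, s(i, i) ∈ F
  · rw [← Set.ncard_univ]
    exact (Nat.sub_le _ _).trans <| Set.ncard_le_ncard_of_injOn Sym2.diag (fun i _ => hloops i)
      Sym2.diag_injective.injOn
  obtain ⟨i₀, hi₀⟩ := not_forall.1 hloops
  have hpartner (j : ι) (hj : j ≠ i₀) : ∃ p, (p = i₀ ∨ p = j) ∧ s(p, j) ∈ F :=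
    ((hF i₀ j hj.symm).resolve_left hi₀).elim (fun h => ⟨i₀, .inl rfl, h⟩)
      fun h => ⟨j, .inr rfl, h⟩
  choose! partner hpartner hmem using hpartner
  have hinj : Set.InjOn (fun j => s(partner j, j)) {i₀}ᶜ := by
    intro i hi j hj h
    rcases Sym2.eq_iff.1 h with ⟨-, hij⟩ | ⟨hij, -⟩
    · exact hij
    · rcases hpartner i hi with h₀ | h₀
      · exact absurd (hij.symm.trans h₀) hj
      · exact h₀.symm.trans hij
  rw [← Set.ncard_singleton i₀, ← Set.ncard_compl]
  exact Set.ncard_le_ncard_of_injOn _ hmem hinj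

theorem ncard_diagSet_compl : (Sym2.diagSetᶜ : Set (Sym2 ι)).ncard = (Nat.card ι).choose 2 := by
  classical
  cases nonempty_fintype ι
  rw [← Nat.card_coe_set_eq, Nat.card_eq_fintype_card, Sym2.card_diagSet_compl,
    Nat.card_eq_fintype_card]

theorem cographAlpha_splitGraph_eq [Nonempty ι] :
    cographAlpha (splitGraph ((· = ·) : ι → ι → Prop)) = Nat.card ι - 1 := by
  apply le_antisymm
  · obtain ⟨i₀⟩ := ‹Nonempty ι›
    calc _ ≤ {p : ι × ι | p.1 = p.2 ∧ ¬(p.1 = i₀ ∧ p.2 = i₀)}.ncard :=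
          cographAlpha_splitGraph_le (r' := fun i j => i = i₀ ∧ j = i₀)
            (fun _ _ h => h.1.trans h.2.symm) fun i _ => (em (i = i₀)).elim
              (fun hi => .inr fun _ h => ⟨hi, h.2⟩) (fun hi => .inl fun _ h => absurd h.1 hi)
      _ ≤ ({i₀}ᶜ : Set ι).ncard :=
          Set.ncard_le_ncard_of_injOn Prod.fst (by grind) (by grind [Set.InjOn])
      _ = Nat.card ι - 1 := by rw [Set.ncard_compl, Set.ncard_singleton]
  · refine le_cographAlpha fun F hF => ?_
    let fold : Sym2 (ι ⊕ ι) → Sym2 ι := Sym2.map (Sum.elim id id)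
    refine (card_sub_one_le_ncard_of_loop_or_edge_mem fun i j hij => ?_).trans
      (Set.ncard_image_le (f := fold))
    have hP : IsP4 (splitGraph (· = ·)) (.inl i) (.inr i) (.inr j) (.inl j) :=
      isP4_splitGraph_iff.2 ⟨i, i, j, j, by simp [hij, hij.symm]⟩
    exact (hF.mem_of_isP4 hP).imp (Set.mem_image_of_mem fold)
      (Or.imp (Set.mem_image_of_mem fold) (Set.mem_image_of_mem fold))

theorem cographAlpha_splitGraph_ne :
    cographAlpha (splitGraph ((· ≠ ·) : ι → ι → Prop)) = (Nat.card ι).choose 2 := by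
  rw [← ncard_diagSet_compl]
  apply le_antisymm
  · classical
    let : LinearOrder ι := linearOrderOfSTO WellOrderingRel
    calc _ ≤ {p : ι × ι | p.1 ≠ p.2 ∧ ¬p.1 < p.2}.ncard :=
          cographAlpha_splitGraph_le (fun _ _ => ne_of_lt) fun i i' =>
            (le_total i' i).imp (fun h _ => h.trans_lt) (fun h _ => h.trans_lt)
      _ ≤ (Sym2.diagSetᶜ : Set (Sym2 ι)).ncard := by
        refine Set.ncard_le_ncard_of_injOn (fun p => s(p.1, p.2)) (fun p hp => hp.1) ?_
        rintro ⟨i, j⟩ hij ⟨i', j'⟩ hij' h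
        rcases Sym2.eq_iff.1 h with ⟨rfl, rfl⟩ | ⟨rfl, rfl⟩
        · rfl
        · exact (hij.1.lt_or_gt.elim hij.2 hij'.2).elim
  · refine le_cographAlpha fun F hF => ?_
    let fold : Sym2 (ι ⊕ ι) → Sym2 ι := Sym2.map (Sum.elim id id)
    refine (Set.ncard_le_ncard ?_).trans (Set.ncard_image_le (f := fold))
    rintro ⟨i, j⟩ (hij : i ≠ j)
    have hP : IsP4 (splitGraph (· ≠ ·)) (.inl i) (.inr j) (.inr i) (.inl j) :=
      isP4_splitGraph_iff.2 ⟨i, j, i, j, by simp [hij, hij.symm]⟩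
    rcases hF.mem_of_isP4 hP with h | h | h
    · exact ⟨_, h, rfl⟩
    · exact ⟨_, h, Sym2.eq_swap⟩
    · exact ⟨_, h, rfl⟩

end Legs

theorem cographAlpha_spider_body_general {G : SimpleGraph V} {S K : Set V} (hdisj : Disjoint S K)
    (hS : G.IsIndepSet S) (hK : G.IsClique K) (hfin : K.Finite) (hne : K.Nonempty) (φ : S ≃ K) :
    ((∀ s : S, G.neighborSet s ∩ K = {(φ s : V)}) →
      cographAlpha (G.induce (S ∪ K)) = K.ncard - 1) ∧
    ((∀ s : S, G.neighborSet s ∩ K = K \ {(φ s : V)}) →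
      cographAlpha (G.induce (S ∪ K)) = K.ncard * (K.ncard - 1) / 2) := by
  have := hfin.to_subtype
  have := hne.to_subtype
  have hadj (i j : K) : G.Adj (φ.symm i) j ↔ (j : V) ∈ G.neighborSet (φ.symm i) ∩ K := by simp
  let legs : splitGraph (fun i j : K => G.Adj (φ.symm i) j) ≃g G.induce (S ∪ K) :=
    splitGraphIsoInduce hdisj hS hK φ.symm (Equiv.refl K)
  rw [← cographAlpha_congr legs, ← Nat.choose_two_right, ← Nat.card_coe_set_eq]
  refine ⟨fun hthin => ?_, fun hthick => ?_⟩
  · have hlegs : (fun i j : K => G.Adj (φ.symm i) j) = (· = ·) := by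
      ext i j
      simp [hadj, hthin, Subtype.coe_inj, eq_comm]
    rw [hlegs, cographAlpha_splitGraph_eq]
  · have hlegs : (fun i j : K => G.Adj (φ.symm i) j) = (· ≠ ·) := by
      ext i j
      simp [hadj, hthick, Subtype.coe_inj, eq_comm]
    rw [hlegs, cographAlpha_splitGraph_ne]

/-- If `G` is a spider with vertex partition `S, K, R`, then
`α(G[S ∪ K])` equals either `|K| - 1` or `|K|(|K| - 1)/2`. -/
theorem cographAlpha_spider_body (G : SimpleGraph V)
    (S K R : Set V) (hSKR : IsSpiderPartition G S K R) :
    cographAlpha (G.induce (S ∪ K)) = K.ncard - 1 ∨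
    cographAlpha (G.induce (S ∪ K)) = K.ncard * (K.ncard - 1) / 2 := by
  obtain ⟨-, hdisj, -, -, -, hcard, hS, hK, -, -, φ, hφ⟩ := hSKR
  have hpos : K.ncard ≠ 0 := by omega
  have ⟨hthin, hthick⟩ := cographAlpha_spider_body_general hdisj (fun u hu v hv => hS u hu v hv)
    (fun u hu v hv => hK u hu v hv) (Set.finite_of_ncard_ne_zero hpos)
    (Set.nonempty_of_ncard_ne_zero hpos) φ
  exact hφ.imp hthin hthick
end

section
/- Let G be a P4-sparse graph and let A be a set of four vertices inducing a P4 in G. Then there do not exist distinct vertices u, v in I(A) ∪ P(A) and a vertex x in T(A) such that the edges of G among {u, v, x} are exactly uv and ux. -/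
open SimpleGraph

variable {V : Type*}

/-- `T(A)`: the vertices outside `A` adjacent to all vertices of `A`. -/
def tSet (G : SimpleGraph V) (A : Set V) : Set V :=
  {v | v ∉ A ∧ ∀ a ∈ A, G.Adj v a}

/-- `I(A)`: the vertices outside `A` adjacent to no vertex of `A`. -/
def iSet (G : SimpleGraph V) (A : Set V) : Set V :=
  {v | v ∉ A ∧ ∀ a ∈ A, ¬G.Adj v a}

/-- `P(A)`: the vertices `v` outside `A` with `1 ≤ |N(v) ∩ A| ≤ 3`. -/
def pSet (G : SimpleGraph V) (A : Set V) : Set V :=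
  {v | v ∉ A ∧ 1 ≤ (G.neighborSet v ∩ A).ncard ∧ (G.neighborSet v ∩ A).ncard ≤ 3}

/-!
In a `P4`-sparse graph a vertex outside an induced path `abcd` that sees an endpoint must see the
whole path, since otherwise it completes a second `P4` inside the resulting five vertices. Hence
`u` and `v` miss both `a` and `d`, while `x` sees both, so `vuxa` and `vuxd` are two `P4`s inside
the five vertices `v, u, x, a, d`.
-/

section

variable {G : SimpleGraph V} {A B : Set V} {a b c d v : V}

lemma isP4_iff :
    IsP4 G a b c d ↔
      G.Adj a b ∧ G.Adj b c ∧ G.Adj c d ∧ ¬G.Adj a c ∧ ¬G.Adj a d ∧ ¬G.Adj b d := by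
  refine ⟨fun ⟨_, _, _, _, _, _, h⟩ ↦ h, fun ⟨hab, hbc, hcd, hac, had, hbd⟩ ↦
    ⟨hab.ne, ?_, ?_, hbc.ne, ?_, hcd.ne, hab, hbc, hcd, hac, had, hbd⟩⟩
  · rintro rfl
    exact had hcd
  · rintro rfl
    exact hac hcd.symm
  · rintro rfl
    exact had hab

namespace IsP4

lemma symm (h : IsP4 G a b c d) : IsP4 G d c b a := by
  obtain ⟨hab, hbc, hcd, hac, had, hbd⟩ := isP4_iff.mp h
  exact isP4_iff.mpr
    ⟨hcd.symm, hbc.symm, hab.symm, mt Adj.symm hbd, mt Adj.symm had, mt Adj.symm hac⟩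

lemma inducesP4 (h : IsP4 G a b c d) : InducesP4 G {a, b, c, d} :=
  ⟨a, b, c, d, h, rfl⟩

end IsP4

lemma InducesP4.ncard_eq_four (hA : InducesP4 G A) : A.ncard = 4 := by
  obtain ⟨a, b, c, d, ⟨hab, hac, had, hbc, hbd, hcd, -⟩, rfl⟩ := hA
  exact Set.ncard_eq_four.mpr ⟨a, b, c, d, hab, hac, had, hbc, hbd, hcd, rfl⟩

lemma iSet_union_pSet_subset_compl : iSet G A ∪ pSet G A ⊆ Aᶜ :=
  Set.union_subset (fun _ h ↦ h.1) (fun _ h ↦ h.1)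

lemma disjoint_iSet_union_pSet_tSet (hA : 3 < A.ncard) :
    Disjoint (iSet G A ∪ pSet G A) (tSet G A) := by
  refine Set.disjoint_left.mpr ?_
  rintro v (⟨-, hnone⟩ | ⟨-, -, hle⟩) ⟨-, hall⟩
  · obtain ⟨y, hy⟩ := Set.nonempty_of_ncard_ne_zero (s := A) (by omega)
    exact hnone y hy (hall y hy)
  · have hAN : A ⊆ G.neighborSet v := hall
    rw [Set.inter_eq_right.mpr hAN] at hle
    omega

namespace P4Sparse

lemma notMem_of_subset_insert (hG : P4Sparse G) (hA : InducesP4 G A) (hB : InducesP4 G B)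
    (hv : v ∉ A) (hBA : B ⊆ insert v A) : v ∉ B := by
  have hfin : A.Finite := Set.finite_of_ncard_ne_zero (by simp [hA.ncard_eq_four])
  have hcard : (insert v A).ncard = 5 := by
    rw [Set.ncard_insert_of_notMem hv hfin, hA.ncard_eq_four]
  rwa [← hG _ hcard A B (Set.subset_insert v A) hBA hA hB]

lemma eq_of_isP4_of_isP4 (hG : P4Sparse G) {p q r : V} (ha : IsP4 G p q r a)
    (hd : IsP4 G p q r d) : a = d := by
  by_contra hne
  have hda : d ∉ ({p, q, r, a} : Set V) := by
    obtain ⟨-, -, hpd, -, hqd, hrd, -⟩ := hd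
    simp [hpd.symm, hqd.symm, hrd.symm, Ne.symm hne]
  exact hG.notMem_of_subset_insert ha.inducesP4 hd.inducesP4 hda (by grind) (by simp)

lemma mem_tSet_of_adj_endpoint (hG : P4Sparse G) (h : IsP4 G a b c d)
    (hv : v ∉ ({a, b, c, d} : Set V)) (hva : G.Adj v a) : v ∈ tSet G {a, b, c, d} := by
  have not_isP4 {p q r s : V} (hmem : v ∈ ({p, q, r, s} : Set V))
      (hsub : ({p, q, r, s} : Set V) ⊆ {v, a, b, c, d}) : ¬IsP4 G p q r s :=
    fun h' ↦ hG.notMem_of_subset_insert h.inducesP4 h'.inducesP4 hv hsub hmem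
  obtain ⟨hab, hbc, hcd, hac, had, hbd⟩ := isP4_iff.mp h
  have hvd_of_hvc (hvc : G.Adj v c) : G.Adj v d := by
    by_contra hvd
    exact not_isP4 (by simp) (by grind) (isP4_iff.mpr ⟨hva.symm, hvc, hcd, hac, had, hvd⟩)
  have hvd : G.Adj v d := by
    by_contra hvd
    have hvc : ¬G.Adj v c := mt hvd_of_hvc hvd
    have hvb : G.Adj v b := by
      by_contra hvb
      exact not_isP4 (by simp) (by grind) (isP4_iff.mpr ⟨hva, hab, hbc, hvb, hvc, hac⟩)
    exact not_isP4 (by simp) (by grind) (isP4_iff.mpr ⟨hvb, hbc, hcd, hvc, hvd, hbd⟩)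
  have hvb : G.Adj v b := by
    by_contra hvb
    exact not_isP4 (by simp) (by grind)
      (isP4_iff.mpr ⟨hab.symm, hva.symm, hvd, mt Adj.symm hvb, hbd, had⟩)
  have hvc : G.Adj v c := by
    by_contra hvc
    exact not_isP4 (by simp) (by grind)
      (isP4_iff.mpr ⟨hva.symm, hvd, hcd.symm, had, hac, hvc⟩)
  refine ⟨hv, ?_⟩
  rintro y (rfl | rfl | rfl | rfl) <;> assumption

lemma not_adj_endpoint (hG : P4Sparse G) (h : IsP4 G a b c d)
    (hv : v ∈ iSet G {a, b, c, d} ∪ pSet G {a, b, c, d}) : ¬G.Adj v a := by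
  intro hva
  have hcard : 3 < ({a, b, c, d} : Set V).ncard := by simp [h.inducesP4.ncard_eq_four]
  exact Set.disjoint_left.mp (disjoint_iSet_union_pSet_tSet hcard) hv
    (hG.mem_tSet_of_adj_endpoint h (iSet_union_pSet_subset_compl hv) hva)

lemma not_adj_endpoints (hG : P4Sparse G) (h : IsP4 G a b c d)
    (hv : v ∈ iSet G {a, b, c, d} ∪ pSet G {a, b, c, d}) : ¬G.Adj v a ∧ ¬G.Adj v d := by
  have hrev : ({a, b, c, d} : Set V) = {d, c, b, a} := by grind
  exact ⟨hG.not_adj_endpoint h hv, hG.not_adj_endpoint h.symm (hrev ▸ hv)⟩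

end P4Sparse

end

/-- **Observation 2.3.** If `G` is `P4`-sparse and `A` induces a `P4`, then
there are no distinct `u, v ∈ I(A) ∪ P(A)` and `x ∈ T(A)` such that the edges of `G` among
`{u, v, x}` are exactly `uv` and `ux`. -/
theorem p4Sparse_obs_2_3 (G : SimpleGraph V) (hG : P4Sparse G)
    (a b c d : V) (hP4 : IsP4 G a b c d) (A : Set V) (hA : A = {a, b, c, d}) :
    ¬∃ u v x : V, u ≠ v ∧ u ∈ iSet G A ∪ pSet G A ∧ v ∈ iSet G A ∪ pSet G A ∧
      x ∈ tSet G A ∧ G.Adj u v ∧ G.Adj u x ∧ ¬G.Adj v x := by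
  subst hA
  rintro ⟨u, v, x, -, hu, hv, ⟨-, hx⟩, huv, hux, hvx⟩
  obtain ⟨hua, hud⟩ := hG.not_adj_endpoints hP4 hu
  obtain ⟨hva, hvd⟩ := hG.not_adj_endpoints hP4 hv
  have hvuxa : IsP4 G v u x a := isP4_iff.mpr ⟨huv.symm, hux, hx a (by simp), hvx, hva, hua⟩
  have hvuxd : IsP4 G v u x d := isP4_iff.mpr ⟨huv.symm, hux, hx d (by simp), hvx, hvd, hud⟩
  have had : a ≠ d := hP4.2.2.1
  exact had (hG.eq_of_isP4_of_isP4 hvuxa hvuxd)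
end
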